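/- arXiv:2502.03604 — 4 statements merged into one kernel-verified Lean document; each statement's English description precedes it below -/
import Mathlib

section
/- Let f : ℝ^d → ℝ be ℓ-Lipschitz smooth and let α > 0. Then the smoothed function f_α is differentiable, and the two-point zeroth-order estimator is an unbiased estimator of its gradient: for every x ∈ ℝ^d, E_u[((f(x + αu) − f(x − αu))/(2α))·u] = ∇f_α(x), where u is uniformly distributed on the Euclidean sphere of radius √d centered at the origin in ℝ^d. -/
open MeasureTheory Metric

/-- The uniform probability measure on the closed Euclidean ball of radius `√d`
centered at the origin in `ℝ^d`. -/
noncomputable def uniformBall (d : ℕ) : Measure (EuclideanSpace ℝ (Fin d)) :=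
  (volume (closedBall (0 : EuclideanSpace ℝ (Fin d)) (Real.sqrt d)))⁻¹ •
    volume.restrict (closedBall (0 : EuclideanSpace ℝ (Fin d)) (Real.sqrt d))

/-- The uniform probability measure on the Euclidean sphere of radius `√d` centered at the
origin in `ℝ^d`, realized as the pushforward of the uniform measure on the ball of radius
`√d` under the radial projection onto that sphere. -/
noncomputable def uniformSphere (d : ℕ) : Measure (EuclideanSpace ℝ (Fin d)) :=
  (uniformBall d).map (fun x => (Real.sqrt d / ‖x‖) • x)


section
open Filter Topology Set
set_option linter.unusedSectionVars false
variable {E : Type*} [NormedAddCommGroup E] [InnerProductSpace ℝ E] [FiniteDimensional ℝ E]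
  [MeasurableSpace E] [BorelSpace E]

lemma norm_line_deriv (v w : E) (hv : v ≠ 0) :
    HasDerivAt (fun t : ℝ => ‖v + t • w‖) (inner ℝ v w / ‖v‖) 0 := by
  have h1 : HasDerivAt (fun t : ℝ => v + t • w) w 0 := by
    simpa using ((hasDerivAt_id (0:ℝ)).smul_const w).const_add v
  have h2 := h1.norm_sq
  have hv' : ‖v‖ ≠ 0 := norm_ne_zero_iff.2 hv
  have h3 := h2.sqrt (by simpa using hv)
  simp only [zero_smul, add_zero, Real.sqrt_sq (norm_nonneg _)] at h3
  convert h3 using 1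
  field_simp

noncomputable def cutoff (R s : ℝ) (v : E) : ℝ := max 0 (min 1 ((R - ‖v‖) / (R * (1 - s))))

lemma cutoff_lip (R s : ℝ) (hR : 0 < R) (hs : s < 1) :
    LipschitzWith (Real.toNNReal (1 / (R * (1 - s)))) (cutoff R s : E → ℝ) := by
  have hε : 0 < R * (1 - s) := mul_pos hR (by linarith)
  have : LipschitzWith (Real.toNNReal (1 / (R * (1 - s))))
      (fun v : E => (R - ‖v‖) / (R * (1 - s))) := by
    apply LipschitzWith.of_dist_le_mul
    intro x y
    rw [Real.coe_toNNReal _ (by positivity), Real.dist_eq, dist_eq_norm, ← sub_div, abs_div,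
      abs_of_pos hε, div_mul_eq_mul_div, one_mul]
    gcongr
    have : R - ‖x‖ - (R - ‖y‖) = -(‖x‖ - ‖y‖) := by ring
    rw [this, abs_neg]
    exact abs_norm_sub_norm_le x y
  exact (this.const_min 1).const_max 0

lemma cutoff_zero (R s : ℝ) (hR : 0 < R) (hs : s < 1) (v : E) (hv : R ≤ ‖v‖) :
    cutoff R s v = 0 := by
  have hε : 0 < R * (1 - s) := mul_pos hR (by linarith)
  have : (R - ‖v‖) / (R * (1 - s)) ≤ 0 := div_nonpos_of_nonpos_of_nonneg (by linarith) hε.le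
  unfold cutoff
  rw [min_eq_right (by linarith), max_eq_left this]

lemma cutoff_one (R s : ℝ) (hR : 0 < R) (hs : s < 1) (v : E) (hv : ‖v‖ ≤ s * R) :
    cutoff R s v = 1 := by
  have hε : 0 < R * (1 - s) := mul_pos hR (by linarith)
  have : 1 ≤ (R - ‖v‖) / (R * (1 - s)) := by rw [le_div_iff₀ hε]; nlinarith
  unfold cutoff
  rw [min_eq_left this, max_eq_right (by norm_num)]

lemma cutoff_mid (R s : ℝ) (hR : 0 < R) (hs : s < 1) (v : E) (hv : s * R ≤ ‖v‖) (hv2 : ‖v‖ ≤ R) :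
    cutoff R s v = (R - ‖v‖) / (R * (1 - s)) := by
  have hε : 0 < R * (1 - s) := mul_pos hR (by linarith)
  have : (R - ‖v‖) / (R * (1 - s)) ≤ 1 := by rw [div_le_iff₀ hε]; nlinarith
  unfold cutoff
  rw [min_eq_right this, max_eq_right (div_nonneg (by linarith) hε.le)]

lemma cutoff_bd (R s : ℝ) (v : E) : ‖cutoff R s v‖ ≤ 1 := by
  unfold cutoff
  rw [Real.norm_of_nonneg (le_max_left _ _)]
  exact max_le (by norm_num) (min_le_left _ _)

lemma cutoff_supp (R s : ℝ) (hR : 0 < R) (hs : s < 1) :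
    HasCompactSupport (cutoff R s : E → ℝ) := by
  apply HasCompactSupport.of_support_subset_isCompact (isCompact_closedBall (0:E) R)
  intro v hv
  by_contra h
  apply hv
  apply cutoff_zero R s hR hs
  simp at h
  exact h.le

lemma cutoff_lineDeriv (R s : ℝ) (hR : 0 < R) (hs0 : 0 < s) (hs : s < 1) (e v : E)
    (h1 : ‖v‖ ≠ R) (h2 : ‖v‖ ≠ s * R) :
    lineDeriv ℝ (cutoff R s : E → ℝ) v (-e) =
      (closedBall (0:E) R \ closedBall 0 (s * R)).indicator
        (fun v => (R * (1 - s))⁻¹ * (inner ℝ v e / ‖v‖)) v := by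
  have hsR : s * R < R := by nlinarith
  have hc : Continuous (fun t : ℝ => ‖v + t • (-e)‖) := by fun_prop
  have hc0 : ‖v + (0:ℝ) • (-e)‖ = ‖v‖ := by simp
  unfold lineDeriv
  rcases lt_or_gt_of_ne h1 with h1 | h1
  · rcases lt_or_gt_of_ne h2 with h2 | h2
    · have : (fun t : ℝ => cutoff R s (v + t • (-e))) =ᶠ[𝓝 0] fun _ => (1:ℝ) := by
        filter_upwards [hc.continuousAt.eventually_lt (f := fun t : ℝ => ‖v + t • (-e)‖)
          (continuousAt_const (y := s * R)) (by rw [hc0]; exact h2)] with t ht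
        exact cutoff_one R s hR hs _ ht.le
      rw [this.deriv_eq, indicator_of_notMem]
      · simp
      · simp; intro _; exact h2.le
    · have : (fun t : ℝ => cutoff R s (v + t • (-e))) =ᶠ[𝓝 0]
          fun t => (R - ‖v + t • (-e)‖) / (R * (1 - s)) := by
        filter_upwards [(continuousAt_const (y := s * R)).eventually_lt hc.continuousAt
          (by rw [hc0]; exact h2), hc.continuousAt.eventually_lt
          (continuousAt_const (y := R)) (by rw [hc0]; exact h1)] with t ht ht2
        exact cutoff_mid R s hR hs _ ht.le ht2.le
      rw [this.deriv_eq, indicator_of_mem]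
      · have hv : v ≠ 0 := by
          rintro rfl; simp at h2; nlinarith
        have := ((norm_line_deriv v (-e) hv).const_sub R).div_const (R * (1 - s))
        rw [this.deriv, inner_neg_right]
        ring
      · simp; exact ⟨h1.le, h2⟩
  · have : (fun t : ℝ => cutoff R s (v + t • (-e))) =ᶠ[𝓝 0] fun _ => (0:ℝ) := by
      filter_upwards [(continuousAt_const (y := R)).eventually_lt hc.continuousAt
          (by rw [hc0]; exact h1)] with t ht
      exact cutoff_zero R s hR hs _ ht.le
    rw [this.deriv_eq, indicator_of_notMem]
    · simp
    · simp; intro h; linarith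

lemma ibp_step [Nontrivial E] (μ : Measure E) [μ.IsAddHaarMeasure] (R s : ℝ) (hR : 0 < R)
    (hs0 : 0 < s) (hs : s < 1) (e : E) (g : E → ℝ) {C : NNReal} (hg : LipschitzWith C g) :
    ∫ v in closedBall (0:E) R, lineDeriv ℝ g v e * cutoff R s v ∂μ =
      (R * (1 - s))⁻¹ * ∫ v in closedBall (0:E) R \ closedBall 0 (s * R),
        g v * (inner ℝ v e / ‖v‖) ∂μ := by
  rw [setIntegral_eq_integral_of_forall_compl_eq_zero, hg.integral_lineDeriv_mul_eq
    (cutoff_lip R s hR hs) (cutoff_supp R s hR hs), ← integral_const_mul,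
    ← integral_indicator (measurableSet_closedBall.diff measurableSet_closedBall)]
  · apply integral_congr_ae
    have a1 : ∀ᵐ v ∂μ, v ∉ sphere (0:E) R := measure_eq_zero_iff_ae_notMem.1
      (Measure.addHaar_sphere μ 0 R)
    have a2 : ∀ᵐ v ∂μ, v ∉ sphere (0:E) (s * R) := measure_eq_zero_iff_ae_notMem.1
      (Measure.addHaar_sphere μ 0 (s * R))
    filter_upwards [a1, a2] with v h1 h2
    simp only [mem_sphere_zero_iff_norm] at h1 h2
    rw [cutoff_lineDeriv R s hR hs0 hs e v h1 h2]
    by_cases hv : v ∈ closedBall (0:E) R \ closedBall 0 (s * R)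
    · rw [indicator_of_mem hv, indicator_of_mem hv]; ring
    · rw [indicator_of_notMem hv, indicator_of_notMem hv]; ring
  · intro v hv
    simp at hv
    rw [cutoff_zero R s hR hs v hv.le, mul_zero]

lemma inner_div_bd (v e : E) : ‖inner ℝ v e / ‖v‖‖ ≤ ‖e‖ := by
  rw [norm_div, norm_norm]
  apply div_le_of_le_mul₀ (norm_nonneg _) (norm_nonneg _)
  rw [mul_comm]; exact norm_inner_le_norm v e

lemma norm_proj_le (R : ℝ) (hR : 0 < R) (v : E) : ‖(R / ‖v‖) • v‖ ≤ R := by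
  rw [norm_smul, norm_div, norm_norm, Real.norm_of_nonneg hR.le]
  by_cases h : ‖v‖ = 0
  · simp [h]; exact hR.le
  · rw [div_mul_cancel₀ _ h]

lemma integrable_bdd (μ : Measure E) [IsFiniteMeasureOnCompacts μ] (R : ℝ) (h : E → ℝ) (M : ℝ)
    (hm : Measurable h) (hb : ∀ v ∈ closedBall (0:E) R, ‖h v‖ ≤ M) :
    IntegrableOn h (closedBall (0:E) R) μ := by
  apply IntegrableOn.of_bound (C := M) (isCompact_closedBall (0:E) R).measure_lt_top
    hm.aestronglyMeasurable
  exact (ae_restrict_iff' measurableSet_closedBall).2 (Eventually.of_forall hb)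

lemma scale_step (μ : Measure E) [μ.IsAddHaarMeasure] (R s : ℝ) (hR : 0 < R)
    (hs0 : 0 < s) (hs : s < 1) (h : E → ℝ) (hh : ∀ v, h (s • v) = h v)
    (hi : IntegrableOn h (closedBall (0:E) R) μ) :
    ∫ v in closedBall (0:E) R \ closedBall 0 (s * R), h v ∂μ =
      (1 - s ^ (Module.finrank ℝ E)) * ∫ v in closedBall (0:E) R, h v ∂μ := by
  rw [setIntegral_sdiff measurableSet_closedBall hi
    (closedBall_subset_closedBall (by nlinarith))]
  have := Measure.setIntegral_comp_smul_of_pos μ h (closedBall (0:E) R) hs0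
  simp only [hh] at this
  rw [_root_.smul_closedBall _ _ hR.le, smul_zero, Real.norm_of_nonneg hs0.le, smul_eq_mul,
    eq_inv_mul_iff_mul_eq₀ (by positivity)] at this
  rw [← this]; ring

lemma vol_step (μ : Measure E) [μ.IsAddHaarMeasure] (R s : ℝ) (hR : 0 < R)
    (hs0 : 0 < s) (hs : s < 1) :
    μ.real (closedBall (0:E) R \ closedBall 0 (s * R)) =
      (1 - s ^ (Module.finrank ℝ E)) * μ.real (closedBall (0:E) R) := by
  have := scale_step μ R s hR hs0 hs (fun _ => 1) (by simp)
    (integrable_bdd μ R _ 1 measurable_const (by simp))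
  simpa using this

lemma proj_close (R s : ℝ) (hR : 0 < R) (hs0 : 0 < s) (v : E)
    (hv : v ∈ closedBall (0:E) R \ closedBall 0 (s * R)) :
    ‖v - (R / ‖v‖) • v‖ ≤ R * (1 - s) := by
  simp at hv
  have hv0 : 0 < ‖v‖ := lt_trans (by positivity) hv.2
  have : v - (R / ‖v‖) • v = (1 - R / ‖v‖) • v := by rw [sub_smul, one_smul]
  rw [this, norm_smul, ← norm_norm v, ← norm_mul, norm_norm, sub_mul, one_mul, div_mul_cancel₀ _ hv0.ne',
    Real.norm_eq_abs, abs_sub_comm, abs_of_nonneg (by linarith)]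
  nlinarith

lemma key [Nontrivial E] (μ : Measure E) [μ.IsAddHaarMeasure] (R : ℝ) (hR : 0 < R)
    (e : E) (g : E → ℝ) {C : NNReal} (hg : LipschitzWith C g) :
    R * ∫ v in closedBall (0:E) R, lineDeriv ℝ g v e ∂μ =
      Module.finrank ℝ E *
        ∫ v in closedBall (0:E) R, g ((R / ‖v‖) • v) * (inner ℝ v e / ‖v‖) ∂μ := by
  set d := Module.finrank ℝ E
  set I := ∫ v in closedBall (0:E) R, g ((R / ‖v‖) • v) * (inner ℝ v e / ‖v‖) ∂μ with hI
  have hgc := hg.continuous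
  have hGm : Measurable (fun v : E => g ((R / ‖v‖) • v) * (inner ℝ v e / ‖v‖)) := by
    have : Measurable (fun v : E => (R / ‖v‖) • v) := by fun_prop
    have := hgc.measurable.comp this
    refine Measurable.mul this ?_
    fun_prop
  obtain ⟨M, hM⟩ := (isCompact_closedBall (0:E) R).exists_bound_of_continuousOn hgc.continuousOn
  have hM0 : 0 ≤ M := (norm_nonneg _).trans (hM 0 (by simp [hR.le]))
  have hGi : IntegrableOn (fun v : E => g ((R / ‖v‖) • v) * (inner ℝ v e / ‖v‖))
      (closedBall (0:E) R) μ := by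
    apply integrable_bdd μ R _ (M * ‖e‖) hGm
    intro v hv
    rw [norm_mul]
    exact mul_le_mul (hM _ (by simpa using norm_proj_le R hR v)) (inner_div_bd v e)
      (norm_nonneg _) hM0
  have hgi : IntegrableOn (fun v : E => g v * (inner ℝ v e / ‖v‖)) (closedBall (0:E) R) μ := by
    apply integrable_bdd μ R _ (M * ‖e‖) 
    · refine Measurable.mul hgc.measurable ?_
      fun_prop
    intro v hv
    rw [norm_mul]
    exact mul_le_mul (hM _ hv) (inner_div_bd v e) (norm_nonneg _) hM0
  set V := μ.real (closedBall (0:E) R)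
  -- estimate
  have est : ∀ s : ℝ, 0 < s → s < 1 →
      |R * ∫ v in closedBall (0:E) R, lineDeriv ℝ g v e * cutoff R s v ∂μ -
        (∑ i ∈ Finset.range d, s ^ i) * I| ≤ C * R * ‖e‖ * V * (1 - s ^ d) := by
    intro s hs0 hs
    have h1s : 0 < 1 - s := by linarith
    have hgeo : (1 - s) * (∑ i ∈ Finset.range d, s ^ i) = 1 - s ^ d := mul_neg_geom_sum s d
    have hsc := scale_step μ R s hR hs0 hs (fun v : E => g ((R / ‖v‖) • v) * (inner ℝ v e / ‖v‖))
      (by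
        intro v
        have : (R / ‖s • v‖) • (s • v) = (R / ‖v‖) • v := by
          rw [norm_smul, Real.norm_of_nonneg hs0.le, smul_smul]
          congr 1
          field_simp
        simp only [this]
        congr 1
        rw [norm_smul, Real.norm_of_nonneg hs0.le, real_inner_smul_left]
        field_simp) hGi
    rw [← hI] at hsc
    have hdiff : ‖∫ v in closedBall (0:E) R \ closedBall 0 (s * R),
        (g v * (inner ℝ v e / ‖v‖) - g ((R / ‖v‖) • v) * (inner ℝ v e / ‖v‖)) ∂μ‖ ≤
        (C * (R * (1 - s)) * ‖e‖) * μ.real (closedBall (0:E) R \ closedBall 0 (s * R)) := by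
      apply norm_setIntegral_le_of_norm_le_const
      · exact lt_of_le_of_lt (measure_mono sdiff_subset)
          (isCompact_closedBall (0:E) R).measure_lt_top
      · intro v hv
        rw [← sub_mul, norm_mul]
        gcongr
        · have := hg.dist_le_mul v ((R / ‖v‖) • v)
          rw [dist_eq_norm, dist_eq_norm] at this
          refine this.trans ?_
          gcongr
          exact proj_close R s hR hs0 v hv
        · exact inner_div_bd v e
    rw [vol_step μ R s hR hs0 hs, integral_sub (hgi.mono_set sdiff_subset)
      (hGi.mono_set sdiff_subset), hsc] at hdiff
    rw [ibp_step μ R s hR hs0 hs e g hg]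
    rw [Real.norm_eq_abs] at hdiff
    set J := ∫ v in closedBall (0:E) R \ closedBall 0 (s * R), g v * (inner ℝ v e / ‖v‖) ∂μ
    have : R * ((R * (1 - s))⁻¹ * J) - (∑ i ∈ Finset.range d, s ^ i) * I
        = (1 - s)⁻¹ * (J - (1 - s ^ d) * I) := by
      rw [← hgeo]; field_simp
    rw [this, abs_mul, abs_of_pos (by positivity), inv_mul_le_iff₀ h1s]
    refine hdiff.trans (le_of_eq ?_)
    simp only [V, d]; ring
  -- limit
  let s : ℕ → ℝ := fun n => 1 - 1 / ((n:ℝ) + 2)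
  have hs0 : ∀ n, 0 < s n := fun n => by
    have : (1:ℝ) / ((n:ℝ) + 2) < 1 := by rw [div_lt_one (by positivity)]; linarith [n.cast_nonneg (α := ℝ)]
    simp only [s]; linarith
  have hs1 : ∀ n, s n < 1 := fun n => by
    have : (0:ℝ) < 1 / ((n:ℝ) + 2) := by positivity
    simp only [s]; linarith
  have hst : Tendsto s atTop (𝓝 1) := by
    have : Tendsto (fun n : ℕ => (1:ℝ) / ((n:ℝ) + 2)) atTop (𝓝 0) :=
      tendsto_const_nhds.div_atTop (tendsto_atTop_add_const_right _ _ tendsto_natCast_atTop_atTop)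
    simpa [s] using this.const_sub 1
  have L1 : Tendsto (fun n => ∫ v in closedBall (0:E) R, lineDeriv ℝ g v e * cutoff R (s n) v ∂μ)
      atTop (𝓝 (∫ v in closedBall (0:E) R, lineDeriv ℝ g v e ∂μ)) := by
    apply tendsto_integral_of_dominated_convergence (fun _ => C * ‖e‖)
    · intro n
      exact (aestronglyMeasurable_lineDeriv hgc _).mul
        (cutoff_lip R (s n) hR (hs1 n)).continuous.aestronglyMeasurable
    · exact integrable_bdd μ R _ (C * ‖e‖) measurable_const (by intro v _; simp)
    · intro n
      refine Eventually.of_forall fun v => ?_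
      rw [norm_mul]
      calc _ ≤ (C * ‖e‖) * 1 := mul_le_mul (norm_lineDeriv_le_of_lipschitz ℝ hg) (cutoff_bd _ _ _)
            (norm_nonneg _) (by positivity)
        _ = _ := mul_one _
    · have a1 : ∀ᵐ v ∂(μ.restrict (closedBall (0:E) R)), v ∉ sphere (0:E) R :=
        ae_restrict_of_ae (measure_eq_zero_iff_ae_notMem.1 (Measure.addHaar_sphere μ 0 R))
      filter_upwards [a1, ae_restrict_mem measurableSet_closedBall] with v h1 h2
      simp only [mem_sphere_zero_iff_norm, mem_closedBall_zero_iff] at h1 h2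
      have hlt : ‖v‖ < 1 * R := by rw [one_mul]; exact lt_of_le_of_ne h2 h1
      apply tendsto_const_nhds.congr'
      filter_upwards [(hst.mul_const R).eventually (lt_mem_nhds hlt)] with n hn
      rw [cutoff_one R (s n) hR (hs1 n) v hn.le, mul_one]
  have L2 : Tendsto (fun n => ∑ i ∈ Finset.range d, (s n) ^ i) atTop (𝓝 (d:ℝ)) := by
    have := tendsto_finsetSum (Finset.range d) (fun i _ => hst.pow i)
    simpa using this
  have L3 : Tendsto (fun n => C * R * ‖e‖ * V * (1 - (s n) ^ d)) atTop (𝓝 0) := by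
    simpa using ((hst.pow d).const_sub 1).const_mul (C * R * ‖e‖ * V)
  have L4 := ((L1.const_mul R).sub (L2.mul_const I)).abs
  have := le_of_tendsto_of_tendsto' L4 L3 (fun n => est (s n) (hs0 n) (hs1 n))
  exact sub_eq_zero.1 (abs_nonpos_iff.1 this)
lemma key2 [Nontrivial E] (μ : Measure E) [μ.IsAddHaarMeasure] (R : ℝ) (hR : 0 < R)
    (e : E) (g : E → ℝ) (hg : Differentiable ℝ g) (hg' : Continuous (fderiv ℝ g)) :
    R * ∫ v in closedBall (0:E) R, fderiv ℝ g v e ∂μ =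
      Module.finrank ℝ E *
        ∫ v in closedBall (0:E) R, g ((R / ‖v‖) • v) * (inner ℝ v e / ‖v‖) ∂μ := by
  obtain ⟨M, hM⟩ := (isCompact_closedBall (0:E) R).exists_bound_of_continuousOn hg'.continuousOn
  have hM0 : 0 ≤ M := (norm_nonneg _).trans (hM 0 (by simp [hR.le]))
  have hl : LipschitzOnWith (Real.toNNReal M) g (closedBall (0:E) R) := by
    apply Convex.lipschitzOnWith_of_nnnorm_fderiv_le (𝕜 := ℝ) (fun x _ => hg x) _
      (convex_closedBall _ _)
    intro x hx
    rw [← NNReal.coe_le_coe, coe_nnnorm, Real.coe_toNNReal _ hM0]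
    exact hM x hx
  obtain ⟨g', hg'l, heq⟩ := hl.extend_real
  have := key μ R hR e g' hg'l
  have a1 : ∀ᵐ v ∂(μ.restrict (closedBall (0:E) R)), v ∉ sphere (0:E) R :=
    ae_restrict_of_ae (measure_eq_zero_iff_ae_notMem.1 (Measure.addHaar_sphere μ 0 R))
  have e1 : ∫ v in closedBall (0:E) R, lineDeriv ℝ g' v e ∂μ
      = ∫ v in closedBall (0:E) R, fderiv ℝ g v e ∂μ := by
    apply integral_congr_ae
    filter_upwards [a1, ae_restrict_mem measurableSet_closedBall] with v h1 h2
    simp only [mem_sphere_zero_iff_norm, mem_closedBall_zero_iff] at h1 h2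
    rw [← (hg v).lineDeriv_eq_fderiv]
    apply Filter.EventuallyEq.lineDeriv_eq
    have : v ∈ ball (0:E) R := by simpa using lt_of_le_of_ne h2 h1
    filter_upwards [isOpen_ball.mem_nhds this] with w hw
    exact (heq (ball_subset_closedBall hw)).symm
  rw [e1] at this
  rw [this]
  congr 1
  apply integral_congr_ae
  refine Eventually.of_forall fun v => ?_
  simp only
  rw [heq (by simpa using norm_proj_le R hR v)]

end

open Filter Topology Set in
lemma main_aux (d : ℕ) (hd : 0 < d) (α : ℝ) (hα : 0 < α)
    (f : EuclideanSpace ℝ (Fin d) → ℝ) (hf : Differentiable ℝ f)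
    (hf' : Continuous (fderiv ℝ f)) (x : EuclideanSpace ℝ (Fin d)) :
    HasFDerivAt (fun x => ∫ v, f (x + α • v) ∂(uniformBall d))
      (innerSL ℝ (∫ u, ((f (x + α • u) - f (x - α • u)) / (2 * α)) • u ∂(uniformSphere d))) x := by
  have : Nonempty (Fin d) := ⟨⟨0, hd⟩⟩
  set R := Real.sqrt d with hRdef
  have hdR : (0:ℝ) < d := by exact_mod_cast hd
  have hR : 0 < R := Real.sqrt_pos.2 hdR
  have hRR : R * R = d := Real.mul_self_sqrt hdR.le
  have hfc := hf.continuous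
  set B := closedBall (0 : (EuclideanSpace ℝ (Fin d))) R with hB
  have hBc : IsCompact B := isCompact_closedBall _ _
  set c : ℝ := ((volume B)⁻¹).toReal with hc
  have hV0 : volume B ≠ 0 := (measure_closedBall_pos volume _ hR).ne'
  have hub : uniformBall d = (volume B)⁻¹ • volume.restrict B := rfl
  have hfin : IsFiniteMeasure (volume.restrict B) :=
    ⟨by rw [Measure.restrict_apply_univ]; exact hBc.measure_lt_top⟩
  have hF : ∀ y, Continuous (fun v => fderiv ℝ f (y + α • v)) := fun y => hf'.comp (by fun_prop)
  -- derivative of the ball average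
  have D0 : HasFDerivAt (fun x => ∫ v in B, f (x + α • v))
      (∫ v in B, fderiv ℝ f (x + α • v)) x := by
    have hcont : Continuous (fun p : (EuclideanSpace ℝ (Fin d)) × (EuclideanSpace ℝ (Fin d)) => fderiv ℝ f (p.1 + α • p.2)) := hf'.comp (by fun_prop)
    obtain ⟨M, hM⟩ := ((isCompact_closedBall x 1).prod hBc).exists_bound_of_continuousOn
      hcont.continuousOn
    apply hasFDerivAt_integral_of_dominated_of_fderiv_le (s := closedBall x 1)
      (bound := fun _ => M) (F' := fun y v => fderiv ℝ f (y + α • v))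
    · exact closedBall_mem_nhds x one_pos
    · refine Eventually.of_forall fun y => Continuous.aestronglyMeasurable (by fun_prop)
    · exact ContinuousOn.integrableOn_compact hBc (by fun_prop)
    · exact (hF x).aestronglyMeasurable
    · filter_upwards [ae_restrict_mem measurableSet_closedBall] with v hv y hy
      exact hM (y, v) ⟨hy, hv⟩
    · exact integrable_const _
    · refine Eventually.of_forall fun v y _ => ?_
      exact (hf (y + α • v)).hasFDerivAt.comp y ((hasFDerivAt_id y).add_const (α • v))
  have D1 : HasFDerivAt (fun x => ∫ v, f (x + α • v) ∂(uniformBall d))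
      (c • ∫ v in B, fderiv ℝ f (x + α • v)) x := by
    simp only [hub, integral_smul_measure]
    exact D0.const_smul c
  refine D1.congr_fderiv (Eq.symm ?_)
  refine ContinuousLinearMap.ext fun e => ?_
  -- left side
  set P : (EuclideanSpace ℝ (Fin d)) → (EuclideanSpace ℝ (Fin d)) := fun v => (R / ‖v‖) • v with hP
  have hPm : Measurable P := by fun_prop
  have hPb : ∀ v, ‖P v‖ ≤ R := fun v => norm_proj_le R hR v
  have hneg : ∀ v, P (-v) = - P v := fun v => by simp [hP]
  set g : (EuclideanSpace ℝ (Fin d)) → ℝ := fun v => f (x + α • v) with hg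
  have hgc : Continuous g := by fun_prop
  have hus : uniformSphere d = (uniformBall d).map P := rfl
  have hq : Continuous (fun u : (EuclideanSpace ℝ (Fin d)) => ((f (x + α • u) - f (x - α • u)) / (2 * α)) • u) := by
    fun_prop
  have intB : ∀ q : (EuclideanSpace ℝ (Fin d)) → (EuclideanSpace ℝ (Fin d)), Continuous q → Integrable (fun v => q (P v)) (volume.restrict B) := by
    intro q hq
    obtain ⟨M, hM⟩ := hBc.exists_bound_of_continuousOn hq.continuousOn
    exact Integrable.of_bound (hq.measurable.comp hPm).aestronglyMeasurable M
      (Eventually.of_forall fun v => hM _ (by simpa [hB] using hPb v))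
  have intR : ∀ q : (EuclideanSpace ℝ (Fin d)) → ℝ, Continuous q → Integrable (fun v => q (P v)) (volume.restrict B) := by
    intro q hq
    obtain ⟨M, hM⟩ := hBc.exists_bound_of_continuousOn hq.continuousOn
    exact Integrable.of_bound (hq.measurable.comp hPm).aestronglyMeasurable M
      (Eventually.of_forall fun v => hM _ (by simpa [hB] using hPb v))
  rw [hus, integral_map hPm.aemeasurable hq.aestronglyMeasurable, hub, integral_smul_measure]
  rw [innerSL_apply_apply, real_inner_smul_left, real_inner_comm, ← integral_inner (intB _ hq) e,
    _root_.smul_apply, smul_eq_mul]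
  rw [ContinuousLinearMap.integral_apply
    ((hF x).continuousOn.integrableOn_compact hBc)]
  congr 1
  -- key identity
  have hgd : ∀ v, HasFDerivAt g (α • fderiv ℝ f (x + α • v)) v := by
    intro v
    have h1 : HasFDerivAt (fun v : (EuclideanSpace ℝ (Fin d)) => x + α • v) (α • ContinuousLinearMap.id ℝ (EuclideanSpace ℝ (Fin d))) v :=
      ((hasFDerivAt_id v).const_smul α).const_add x
    have := (hf (x + α • v)).hasFDerivAt.comp v h1
    refine HasFDerivAt.congr_fderiv this (ContinuousLinearMap.ext fun w => ?_)
    simp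
  have hgf : fderiv ℝ g = fun v => α • fderiv ℝ f (x + α • v) := funext fun v => (hgd v).fderiv
  have K := key2 (volume : Measure (EuclideanSpace ℝ (Fin d))) R hR e g (fun v => (hgd v).differentiableAt)
    (by rw [hgf]; exact (hF x).const_smul α)
  rw [hgf] at K
  simp only [_root_.smul_apply, smul_eq_mul, integral_const_mul] at K
  rw [finrank_euclideanSpace_fin, ← hRR] at K
  have K2 : α * ∫ v in B, fderiv ℝ f (x + α • v) e = ∫ v in B, g (P v) * inner ℝ (P v) e := by
    have : ∫ v in B, g (P v) * inner ℝ (P v) e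
        = R * ∫ v in B, g ((R / ‖v‖) • v) * (inner ℝ v e / ‖v‖) := by
      rw [← integral_const_mul]
      congr 1; ext v
      simp only [hP, real_inner_smul_left]; ring
    rw [this]
    apply mul_left_cancel₀ hR.ne'
    rw [K]; ring
  have S : ∫ v in B, g (-P v) * inner ℝ (P v) e = - ∫ v in B, g (P v) * inner ℝ (P v) e := by
    have := Measure.setIntegral_comp_smul (volume : Measure (EuclideanSpace ℝ (Fin d)))
      (fun v => g (P v) * inner ℝ (P v) e) (R := -1) B (by norm_num)
    rw [hB, _root_.smul_closedBall _ _ hR.le] at this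
    simp [hneg, integral_neg] at this
    simp only [hB]
    linarith
  have T : ∀ v, inner ℝ e (((f (x + α • P v) - f (x - α • P v)) / (2 * α)) • P v)
      = (2 * α)⁻¹ * (g (P v) * inner ℝ (P v) e - g (-P v) * inner ℝ (P v) e) := by
    intro v
    rw [real_inner_smul_right, real_inner_comm]
    simp only [hg, smul_neg, ← sub_eq_add_neg]
    ring
  simp only [T]
  rw [integral_const_mul, integral_sub (intR (fun u => g u * inner ℝ u e) (by fun_prop))
    (intR (fun u => g (-u) * inner ℝ u e) (by fun_prop)), S, ← K2]
  field_simp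
  ring

theorem stmt0 (d : ℕ) (ℓ α : ℝ) (hα : 0 < α)
    (f : EuclideanSpace ℝ (Fin d) → ℝ) (hf : Differentiable ℝ f)
    (hlip : ∀ z₁ z₂, ‖gradient f z₁ - gradient f z₂‖ ≤ ℓ * ‖z₁ - z₂‖) :
    Differentiable ℝ (fun x => ∫ v, f (x + α • v) ∂(uniformBall d)) ∧
    ∀ x : EuclideanSpace ℝ (Fin d),
      (∫ u, ((f (x + α • u) - f (x - α • u)) / (2 * α)) • u ∂(uniformSphere d))
        = gradient (fun x' => ∫ v, f (x' + α • v) ∂(uniformBall d)) x := by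
  rcases Nat.eq_zero_or_pos d with rfl | hd
  · refine ⟨fun x => ?_, fun x => Subsingleton.elim _ _⟩
    exact (hasFDerivAt_of_subsingleton _ x).differentiableAt
  · have hgc : Continuous (gradient f) := by
      have : LipschitzWith (Real.toNNReal ℓ) (gradient f) := by
        apply LipschitzWith.of_dist_le_mul
        intro a b
        rw [dist_eq_norm, dist_eq_norm]
        refine (hlip a b).trans ?_
        gcongr
        exact Real.le_coe_toNNReal ℓ
      exact this.continuous
    have hf' : Continuous (fderiv ℝ f) := by
      have : fderiv ℝ f = fun v => innerSL ℝ (gradient f v) := by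
        ext v w
        simp [gradient]
      rw [this]
      fun_prop
    have H := main_aux d hd α hα f hf hf'
    refine ⟨fun x => (H x).differentiableAt, fun x => ?_⟩
    have : HasGradientAt (fun x' => ∫ v, f (x' + α • v) ∂(uniformBall d))
      (∫ u, ((f (x + α • u) - f (x - α • u)) / (2 * α)) • u ∂(uniformSphere d)) x := H x
    exact this.gradient.symm
end

section
/- Let f : ℝ^d → ℝ be ℓ-Lipschitz smooth and let α > 0. Then for every x ∈ ℝ^d, the gradient of the smoothed function satisfies the bias bound ‖∇f(x) − ∇f_α(x)‖ ≤ (ℓ/2)·α·d^{3/2}. -/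
open MeasureTheory Metric

lemma ub_prob (d : ℕ) : IsProbabilityMeasure (uniformBall d) := by
  have hne : volume (closedBall (0 : EuclideanSpace ℝ (Fin d)) (Real.sqrt d)) ≠ 0 := by
    rcases Nat.eq_zero_or_pos d with h | h
    · subst h
      have : closedBall (0 : EuclideanSpace ℝ (Fin 0)) (Real.sqrt (0:ℕ)) = Set.univ := by
        ext y
        simp [Subsingleton.elim y 0]
      rw [this]
      exact NeZero.ne _
    · exact (measure_closedBall_pos _ _ (by positivity)).ne'
  constructor
  simp only [uniformBall, Measure.smul_apply, Measure.restrict_apply_univ, smul_eq_mul]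
  exact ENNReal.inv_mul_cancel hne measure_closedBall_lt_top.ne

lemma ub_ae (d : ℕ) : ∀ᵐ v ∂(uniformBall d), ‖v‖ ≤ Real.sqrt d := by
  unfold uniformBall
  apply Measure.ae_smul_measure
  filter_upwards [ae_restrict_mem measurableSet_closedBall] with v hv
  simpa using hv

lemma ub_one : ∫ v, ‖v‖ ∂(uniformBall 1) = 1 / 2 := by
  unfold uniformBall
  rw [integral_smul_measure, ← integral_indicator measurableSet_closedBall]
  have h1 : (fun v : EuclideanSpace ℝ (Fin 1) => (closedBall (0 : EuclideanSpace ℝ (Fin 1)) (Real.sqrt (1:ℕ))).indicator (fun v => ‖v‖) v)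
      = fun v => (Set.Iic (1:ℝ)).indicator (fun y => y) ‖v‖ := by
    ext v
    simp [Set.indicator]
  rw [h1, integral_fun_norm_addHaar volume ((Set.Iic (1:ℝ)).indicator (fun y => y))]
  have h2 : ∫ y in Set.Ioi (0:ℝ), y ^ (Module.finrank ℝ (EuclideanSpace ℝ (Fin 1)) - 1) • (Set.Iic (1:ℝ)).indicator (fun y => y) y = 1/2 := by
    simp only [finrank_euclideanSpace, Fintype.card_fin, Nat.sub_self, pow_zero, one_smul]
    rw [setIntegral_indicator measurableSet_Iic, Set.Ioi_inter_Iic,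
      ← intervalIntegral.integral_of_le zero_le_one]
    simp
  have h3 : volume (closedBall (0 : EuclideanSpace ℝ (Fin 1)) (Real.sqrt (1:ℕ))) = volume (ball (0 : EuclideanSpace ℝ (Fin 1)) 1) := by
    rw [Nat.cast_one, Real.sqrt_one, Measure.addHaar_closedBall_eq_addHaar_ball]
  have h4 : volume.real (ball (0 : EuclideanSpace ℝ (Fin 1)) 1) ≠ 0 :=
    (ENNReal.toReal_pos (measure_ball_pos _ _ one_pos).ne' measure_ball_lt_top.ne).ne'
  rw [h2, h3, ENNReal.toReal_inv]
  change (volume.real (ball (0 : EuclideanSpace ℝ (Fin 1)) 1))⁻¹ • _ = _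
  simp only [finrank_euclideanSpace, Fintype.card_fin, one_smul, smul_eq_mul]
  field_simp

lemma ub_int (d : ℕ) : Integrable (fun v => ‖v‖) (uniformBall d) := by
  have := ub_prob d
  refine Integrable.of_bound (by fun_prop) (Real.sqrt d) ?_
  filter_upwards [ub_ae d] with v hv
  simpa using hv

lemma ub_norm (d : ℕ) (hd : 0 < d) : ∫ v, ‖v‖ ∂(uniformBall d) ≤ (d:ℝ) ^ ((3:ℝ)/2) / 2 := by
  have := ub_prob d
  obtain h | h : d = 1 ∨ 2 ≤ d := by omega
  · subst h
    rw [ub_one]; simp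
  · have h1 : ∫ v, ‖v‖ ∂(uniformBall d) ≤ Real.sqrt d := by
      have := integral_mono_ae (ub_int d) (integrable_const (Real.sqrt d)) (ub_ae d)
      simpa using this
    have hd0 : (0:ℝ) < d := by exact_mod_cast hd
    have h2 : (d:ℝ) ^ ((3:ℝ)/2) = d * Real.sqrt d := by
      rw [Real.sqrt_eq_rpow, show (3:ℝ)/2 = 1 + 1/2 by norm_num, Real.rpow_add hd0, Real.rpow_one]
    have h3 : (2:ℝ) ≤ d := by exact_mod_cast h
    rw [h2]
    nlinarith [Real.sqrt_nonneg (d:ℝ)]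

/-- If `f : ℝ^d → ℝ` is differentiable with `ℓ`-Lipschitz gradient and
`α > 0`, then the gradient of the smoothed function `f_α x = E_v [f (x + α v)]`
(`v` uniform on the ball of radius `√d`) satisfies the bias bound
`‖∇f(x) − ∇f_α(x)‖ ≤ (ℓ/2)·α·d^(3/2)`. -/
theorem stmt1 (d : ℕ) (ℓ α : ℝ) (hα : 0 < α)
    (f : EuclideanSpace ℝ (Fin d) → ℝ) (hf : Differentiable ℝ f)
    (hlip : ∀ z₁ z₂, ‖gradient f z₁ - gradient f z₂‖ ≤ ℓ * ‖z₁ - z₂‖) :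
    ∀ x : EuclideanSpace ℝ (Fin d),
      ‖gradient f x - gradient (fun x' => ∫ v, f (x' + α • v) ∂(uniformBall d)) x‖
        ≤ ℓ / 2 * α * (d : ℝ) ^ ((3 : ℝ) / 2) := by
  intro x
  rcases Nat.eq_zero_or_pos d with h0 | hd
  · subst h0
    rw [Subsingleton.elim (gradient f x - _) 0]
    simp
  have := ub_prob d
  have hℓ : 0 ≤ ℓ := by
    have h := hlip (EuclideanSpace.single ⟨0, hd⟩ 1) 0
    have := (norm_nonneg _).trans h
    simpa using this
  have hfd : ∀ z₁ z₂, ‖fderiv ℝ f z₁ - fderiv ℝ f z₂‖ ≤ ℓ * ‖z₁ - z₂‖ := by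
    intro z₁ z₂
    have h := hlip z₁ z₂
    unfold gradient at h
    rwa [← map_sub, LinearIsometryEquiv.norm_map] at h
  have hcont : Continuous (fderiv ℝ f) := by
    have : LipschitzWith ⟨ℓ, hℓ⟩ (fderiv ℝ f) :=
      LipschitzWith.of_dist_le_mul fun a b => by
        rw [dist_eq_norm, dist_eq_norm]; exact hfd a b
    exact this.continuous
  have hfc := hf.continuous
  have hcI : Integrable (fun v => f (x + α • v)) (uniformBall d) := by
    unfold uniformBall
    apply Integrable.smul_measure
    · exact (Continuous.continuousOn (by fun_prop)).integrableOn_compact (isCompact_closedBall _ _)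
    · exact ENNReal.inv_ne_top.2 (measure_closedBall_pos _ _ (by positivity)).ne'
  have hbd : ∀ᵐ v ∂(uniformBall d), ∀ x' ∈ ball x 1,
      ‖fderiv ℝ f (x' + α • v)‖ ≤ ‖fderiv ℝ f x‖ + ℓ * (1 + α * Real.sqrt d) := by
    filter_upwards [ub_ae d] with v hv x' hx'
    have h1 := hfd (x' + α • v) x
    have h2 : ‖x' + α • v - x‖ ≤ 1 + α * Real.sqrt d := by
      have : x' + α • v - x = (x' - x) + α • v := by abel
      rw [this]
      refine (norm_add_le _ _).trans (add_le_add ?_ ?_)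
      · rw [← dist_eq_norm]; exact (mem_ball.1 hx').le
      · rw [norm_smul, Real.norm_of_nonneg hα.le]
        gcongr
    have h3 := norm_sub_norm_le (fderiv ℝ f (x' + α • v)) (fderiv ℝ f x)
    have h4 := mul_le_mul_of_nonneg_left h2 hℓ
    linarith
  have hder : HasFDerivAt (fun x' => ∫ v, f (x' + α • v) ∂(uniformBall d))
      (∫ v, fderiv ℝ f (x + α • v) ∂(uniformBall d)) x := by
    refine hasFDerivAt_integral_of_dominated_of_fderiv_le
      (F' := fun x' v => fderiv ℝ f (x' + α • v))
      (bound := fun _ => ‖fderiv ℝ f x‖ + ℓ * (1 + α * Real.sqrt d))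
      (ball_mem_nhds x one_pos) ?_ hcI ?_ hbd (integrable_const _) ?_
    · exact Filter.Eventually.of_forall fun x' =>
        Continuous.aestronglyMeasurable (by fun_prop)
    · exact Continuous.aestronglyMeasurable (by fun_prop)
    · refine Filter.Eventually.of_forall fun v x' _ => ?_
      exact (hasFDerivAt_comp_add_right (α • v)).2 (hf (x' + α • v)).hasFDerivAt
  have hI : Integrable (fun v => fderiv ℝ f (x + α • v)) (uniformBall d) := by
    refine Integrable.of_bound (Continuous.aestronglyMeasurable (by fun_prop))
      (‖fderiv ℝ f x‖ + ℓ * (1 + α * Real.sqrt d)) ?_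
    · filter_upwards [hbd] with v hv
      exact hv x (mem_ball_self one_pos)
  unfold gradient
  rw [← map_sub, LinearIsometryEquiv.norm_map, hder.fderiv]
  have e : fderiv ℝ f x - ∫ v, fderiv ℝ f (x + α • v) ∂(uniformBall d)
      = ∫ v, (fderiv ℝ f x - fderiv ℝ f (x + α • v)) ∂(uniformBall d) := by
    rw [integral_sub (integrable_const _) hI]
    simp
  rw [e]
  have key : ‖∫ v, (fderiv ℝ f x - fderiv ℝ f (x + α • v)) ∂(uniformBall d)‖
      ≤ ∫ v, ℓ * α * ‖v‖ ∂(uniformBall d) := by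
    refine norm_integral_le_of_norm_le ((ub_int d).const_mul _) ?_
    refine Filter.Eventually.of_forall fun v => ?_
    have := hfd x (x + α • v)
    simpa [norm_smul, abs_of_pos hα, mul_assoc] using this
  rw [integral_const_mul] at key
  have h5 := mul_le_mul_of_nonneg_left (ub_norm d hd) (mul_nonneg hℓ hα.le)
  linarith
end

section
/- Let F₁, F₂ : ℝ^d × ℝ^{d'} → ℝ be differentiable, let τ > 0 be such that for every θ ∈ ℝ^d the function s ↦ F₂(θ, s) is τ-strongly convex, and let λ > 0. Define the penalized objective G_λ(θ, p, s) := F₁(θ, p) + λ(F₂(θ, p) − F₂(θ, s)). If a point (θ_ε, p_ε, s_ε) satisfies ‖∇_s G_λ(θ_ε, p_ε, s_ε)‖ ≤ ε, then the lower-level suboptimality is bounded by F₂(θ_ε, s_ε) − min_{s ∈ ℝ^{d'}} F₂(θ_ε, s) ≤ ε²/(τλ²). -/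
/-- Let `F₁ F₂ : ℝ^d × ℝ^{d'} → ℝ` be differentiable, let `τ > 0` be such
that `s ↦ F₂ θ s` is `τ`-strongly convex for every `θ`, and let `λ > 0`.  For the penalized
objective `G_λ (θ, p, s) = F₁ θ p + λ (F₂ θ p − F₂ θ s)`, if a point `(θε, pε, sε)`
satisfies `‖∇ₛ G_λ (θε, pε, sε)‖ ≤ ε`, then
`F₂ θε sε − inf_s F₂ θε s ≤ ε² / (τ λ²)`. -/
theorem stmt3 (d d' : ℕ) (τ lam ε : ℝ) (hτ : 0 < τ) (hlam : 0 < lam) (hε : 0 ≤ ε)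
    (F₁ F₂ : EuclideanSpace ℝ (Fin d) → EuclideanSpace ℝ (Fin d') → ℝ)
    (hF₁ : Differentiable ℝ (fun z : EuclideanSpace ℝ (Fin d) × EuclideanSpace ℝ (Fin d') =>
      F₁ z.1 z.2))
    (hF₂ : Differentiable ℝ (fun z : EuclideanSpace ℝ (Fin d) × EuclideanSpace ℝ (Fin d') =>
      F₂ z.1 z.2))
    (hsc : ∀ θ, StrongConvexOn Set.univ τ (fun s => F₂ θ s))
    (θε : EuclideanSpace ℝ (Fin d)) (pε sε : EuclideanSpace ℝ (Fin d'))
    (hstat : ‖gradient (fun s => F₁ θε pε + lam * (F₂ θε pε - F₂ θε s)) sε‖ ≤ ε) :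
    F₂ θε sε - (⨅ s, F₂ θε s) ≤ ε ^ 2 / (τ * lam ^ 2) := by
  have hd : DifferentiableAt ℝ (fun s => F₂ θε s) sε := by
    have h2 : DifferentiableAt ℝ
        (fun s : EuclideanSpace ℝ (Fin d') => (θε, s)) sε := by fun_prop
    exact (hF₂ (θε, sε)).comp sε h2
  have hf := hd.hasFDerivAt
  generalize fderiv ℝ (fun s => F₂ θε s) sε = L at hf
  have hG : HasFDerivAt (fun s => F₁ θε pε + lam * (F₂ θε pε - F₂ θε s)) (lam • (-L)) sε :=
    ((hf.const_sub (F₂ θε pε)).const_mul lam).const_add (F₁ θε pε)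
  have hL : lam * ‖L‖ ≤ ε := by
    rw [gradient, LinearIsometryEquiv.norm_map, hG.fderiv, norm_smul, norm_neg,
      Real.norm_of_nonneg hlam.le] at hstat
    exact hstat
  have key : ∀ y, F₂ θε sε - ε ^ 2 / (τ * lam ^ 2) ≤ F₂ θε y := by
    intro y
    have hline : HasDerivAt (fun t : ℝ => F₂ θε (sε + t • (y - sε))) (L (y - sε)) 0 := by
      have h := hf.hasLineDerivAt (y - sε)
      exact h
    have h1 : L (y - sε) ≤ F₂ θε y - F₂ θε sε - τ / 2 * ‖y - sε‖ ^ 2 := by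
      have ht := hline.tendsto_slope_zero_right
      have hr : Filter.Tendsto (fun t : ℝ => F₂ θε y - F₂ θε sε - (1 - t) * (τ / 2 * ‖y - sε‖ ^ 2))
          (nhdsWithin 0 (Set.Ioi 0))
          (nhds (F₂ θε y - F₂ θε sε - (1 - 0) * (τ / 2 * ‖y - sε‖ ^ 2))) := by
        apply Filter.Tendsto.mono_left _ nhdsWithin_le_nhds
        exact Continuous.tendsto (by fun_prop) 0
      rw [sub_zero, one_mul] at hr
      refine le_of_tendsto_of_tendsto ht hr ?_
      filter_upwards [Ioo_mem_nhdsGT (zero_lt_one' ℝ)] with t ht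
      have hc := (hsc θε).2 (Set.mem_univ sε) (Set.mem_univ y)
        (sub_nonneg.2 ht.2.le) ht.1.le (by ring : (1 - t) + t = 1)
      have he : (1 - t) • sε + t • y = sε + t • (y - sε) := by module
      rw [he, norm_sub_rev sε y] at hc
      simp only [smul_eq_mul, zero_add, zero_smul, add_zero] at hc ⊢
      rw [inv_mul_le_iff₀ ht.1]
      linarith
    have h2 : -(‖L‖ * ‖y - sε‖) ≤ L (y - sε) := by
      have := L.le_opNorm (y - sε)
      rw [Real.norm_eq_abs] at this
      exact (abs_le.1 this).1
    have h3 : ‖L‖ ^ 2 / τ ≤ ε ^ 2 / (τ * lam ^ 2) := by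
      rw [div_le_div_iff₀ hτ (by positivity)]
      have : (lam * ‖L‖) ^ 2 ≤ ε ^ 2 := by gcongr
      nlinarith
    have h4 : ‖L‖ * ‖y - sε‖ - τ / 2 * ‖y - sε‖ ^ 2 ≤ ‖L‖ ^ 2 / τ := by
      rw [le_div_iff₀ hτ]
      nlinarith [sq_nonneg (‖L‖ - τ * ‖y - sε‖), sq_nonneg ‖L‖]
    linarith
  have := le_ciInf key
  linarith
end

section
/- Let f : ℝ^D × ℝ^{d'} → ℝ be ℓ-Lipschitz smooth, and suppose that for a fixed x ∈ ℝ^D the map y ↦ f(x, y) is τ-strongly concave with unique maximizer y*(x). Let y ∈ ℝ^{d'}, and let G be a random vector in ℝ^{d'} with E[G] = ∇_y f(x, y) and E[‖G − ∇_y f(x, y)‖²] ≤ σ²/B. Set the step size η = 1/(2ℓ) and define the stochastic gradient ascent step y⁺ := y + ηG. Then E[‖y⁺ − y*(x)‖²] ≤ (1 − τ/(4ℓ))·‖y − y*(x)‖² + σ²/(4ℓ²B). -/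
open MeasureTheory

/-- `ℝ^D × ℝ^{d'}` with the Euclidean (`L²`) product norm. -/
abbrev EuclideanProd (D d' : ℕ) :=
  WithLp 2 (EuclideanSpace ℝ (Fin D) × EuclideanSpace ℝ (Fin d'))

/-- The point of `ℝ^D × ℝ^{d'}` (with the Euclidean product norm) with components `x, y`. -/
noncomputable def euclidPair {D d' : ℕ} (x : EuclideanSpace ℝ (Fin D))
    (y : EuclideanSpace ℝ (Fin d')) : EuclideanProd D d' :=
  (WithLp.equiv 2 (EuclideanSpace ℝ (Fin D) × EuclideanSpace ℝ (Fin d'))).symm (x, y)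


lemma aux_pair_sub {D d' : ℕ} (x : EuclideanSpace ℝ (Fin D)) (a b : EuclideanSpace ℝ (Fin d')) :
    euclidPair x a - euclidPair x b = euclidPair 0 (a - b) := by
  unfold euclidPair
  apply (WithLp.equiv 2 _).injective
  simp [WithLp.equiv]

lemma aux_pair_norm {D d' : ℕ} (a : EuclideanSpace ℝ (Fin d')) :
    ‖euclidPair (0 : EuclideanSpace ℝ (Fin D)) a‖ = ‖a‖ := by
  unfold euclidPair
  simp [WithLp.equiv]

lemma aux_affine {E : Type*} [NormedAddCommGroup E] [NormedSpace ℝ E] (p q : E) (t : ℝ) :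
    HasDerivAt (fun t : ℝ => p + t • q) q t := by
  simpa using ((hasDerivAt_id t).smul_const q).const_add p

lemma aux_comp {E : Type*} [NormedAddCommGroup E] [InnerProductSpace ℝ E] [CompleteSpace E]
    (f : E → ℝ) (hf : Differentiable ℝ f) (p q : E) (t : ℝ) :
    HasDerivAt (fun s : ℝ => f (p + s • q)) (inner ℝ (gradient f (p + t • q)) q) t := by
  have h4 := (hf (p + t • q)).hasFDerivAt.comp_hasDerivAt t (aux_affine p q t)
  have e : inner ℝ (gradient f (p + t • q)) q = fderiv ℝ f (p + t • q) q := by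
    simp [gradient]
  rw [e]
  exact h4

/-- derivative along a line of the partial function -/
lemma aux_line {D d' : ℕ} (f : EuclideanProd D d' → ℝ) (hdiff : Differentiable ℝ f)
    (x : EuclideanSpace ℝ (Fin D)) (y u : EuclideanSpace ℝ (Fin d')) (t : ℝ) :
    HasDerivAt (fun t : ℝ => f (euclidPair x (y + t • u)))
      (inner ℝ (gradient f (euclidPair x (y + t • u))) (euclidPair 0 u)) t := by
  have h1 : ∀ t : ℝ, euclidPair x (y + t • u) = euclidPair x y + t • euclidPair 0 u := by
    intro t
    unfold euclidPair
    apply (WithLp.equiv 2 _).injective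
    simp [WithLp.equiv]
  simp only [h1]
  exact aux_comp f hdiff (euclidPair x y) (euclidPair 0 u) t

lemma aux_diff {D d' : ℕ} (f : EuclideanProd D d' → ℝ) (hdiff : Differentiable ℝ f)
    (x : EuclideanSpace ℝ (Fin D)) :
    Differentiable ℝ (fun y : EuclideanSpace ℝ (Fin d') => f (euclidPair x y)) := by
  apply hdiff.comp
  unfold euclidPair
  have : Differentiable ℝ (fun y : EuclideanSpace ℝ (Fin d') => (x, y)) := by fun_prop
  exact (WithLp.prodContinuousLinearEquiv 2 ℝ (EuclideanSpace ℝ (Fin D))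
    (EuclideanSpace ℝ (Fin d'))).symm.differentiable.comp this

lemma aux_inner {D d' : ℕ} (f : EuclideanProd D d' → ℝ) (hdiff : Differentiable ℝ f)
    (x : EuclideanSpace ℝ (Fin D)) (y u : EuclideanSpace ℝ (Fin d')) :
    inner ℝ (gradient (fun y' => f (euclidPair x y')) y) u
      = inner ℝ (gradient f (euclidPair x y)) (euclidPair 0 u) := by
  have h1 := aux_line f hdiff x y u 0
  have h3 := (aux_diff f hdiff x y).hasGradientAt.hasFDerivAt
  have h2 : HasDerivAt (fun t : ℝ => y + t • u) u 0 := by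
    exact aux_affine _ _ 0
  have h3' : HasFDerivAt (fun y' => f (euclidPair x y'))
      (InnerProductSpace.toDual ℝ (EuclideanSpace ℝ (Fin d'))
        (gradient (fun y' => f (euclidPair x y')) y)) ((fun t : ℝ => y + t • u) 0) := by
    simpa only [zero_smul, add_zero] using h3
  have h4 := h3'.comp_hasDerivAt (0:ℝ) h2
  have h5 := h4.unique h1
  simpa using h5

lemma aux_descent {D d' : ℕ} (ℓ : ℝ) (hℓ : 0 < ℓ) (f : EuclideanProd D d' → ℝ)
    (hdiff : Differentiable ℝ f)
    (hlip : ∀ z₁ z₂, ‖gradient f z₁ - gradient f z₂‖ ≤ ℓ * ‖z₁ - z₂‖)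
    (x : EuclideanSpace ℝ (Fin D)) (y v : EuclideanSpace ℝ (Fin d'))
    (hv : gradient (fun y' => f (euclidPair x y')) y = v) :
    f (euclidPair x y) + ‖v‖ ^ 2 / (2 * ℓ) ≤ f (euclidPair x (y + (1 / ℓ) • v)) := by
  have hvv : inner ℝ (gradient f (euclidPair x y)) (euclidPair 0 v) = ‖v‖ ^ 2 := by
    rw [← aux_inner f hdiff, hv, real_inner_self_eq_norm_sq]
  have hd : ∀ t : ℝ, HasDerivAt
      (fun t : ℝ => f (euclidPair x (y + t • v)) - (t * ‖v‖ ^ 2 - ℓ * ‖v‖ ^ 2 / 2 * t ^ 2))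
      (inner ℝ (gradient f (euclidPair x (y + t • v))) (euclidPair 0 v)
        - (1 * ‖v‖ ^ 2 - ℓ * ‖v‖ ^ 2 / 2 * (2 * t))) t := by
    intro t
    refine (aux_line f hdiff x y v t).sub (((hasDerivAt_id t).mul_const _).sub ?_)
    simpa using (hasDerivAt_pow 2 t).const_mul (ℓ * ‖v‖ ^ 2 / 2)
  have hm : MonotoneOn
      (fun t : ℝ => f (euclidPair x (y + t • v)) - (t * ‖v‖ ^ 2 - ℓ * ‖v‖ ^ 2 / 2 * t ^ 2))
      (Set.Ici 0) := by
    refine monotoneOn_of_deriv_nonneg (convex_Ici 0)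
      (fun t _ => (hd t).continuousAt.continuousWithinAt)
      (fun t _ => (hd t).differentiableAt.differentiableWithinAt) ?_
    intro t ht
    rw [interior_Ici] at ht
    have ht0 : (0:ℝ) < t := ht
    rw [(hd t).deriv]
    have h1 := hlip (euclidPair x y) (euclidPair x (y + t • v))
    rw [aux_pair_sub, aux_pair_norm] at h1
    have h2 : ‖y - (y + t • v)‖ = t * ‖v‖ := by
      rw [show y - (y + t • v) = -(t • v) by abel, norm_neg, norm_smul, Real.norm_of_nonneg ht0.le]
    rw [h2] at h1
    have h3 := real_inner_le_norm (gradient f (euclidPair x y) - gradient f (euclidPair x (y + t • v)))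
      (euclidPair 0 v)
    rw [aux_pair_norm, inner_sub_left, hvv] at h3
    have h4 := mul_le_mul_of_nonneg_right h1 (norm_nonneg v)
    nlinarith
  have h := hm (Set.mem_Ici.2 le_rfl) (Set.mem_Ici.2 (by positivity : (0:ℝ) ≤ 1 / ℓ))
    (by positivity : (0:ℝ) ≤ 1 / ℓ)
  simp only [zero_smul, add_zero] at h
  have e : 1 / ℓ * ‖v‖ ^ 2 - ℓ * ‖v‖ ^ 2 / 2 * (1 / ℓ) ^ 2 = ‖v‖ ^ 2 / (2 * ℓ) := by
    field_simp; ring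
  rw [e] at h
  linarith

lemma aux_strong {D d' : ℕ} (τ : ℝ) (f : EuclideanProd D d' → ℝ)
    (hdiff : Differentiable ℝ f)
    (x : EuclideanSpace ℝ (Fin D)) (y z : EuclideanSpace ℝ (Fin d'))
    (hconc : StrongConcaveOn Set.univ τ (fun y => f (euclidPair x y))) :
    f (euclidPair x z) - f (euclidPair x y) + τ / 2 * ‖y - z‖ ^ 2
      ≤ inner ℝ (gradient (fun y' => f (euclidPair x y')) y) (z - y) := by
  rw [aux_inner f hdiff]
  have h1 := aux_line f hdiff x y (z - y) 0
  simp only [zero_smul, add_zero] at h1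
  have h2 := (hasDerivAt_iff_tendsto_slope.1 h1).mono_left
    (nhdsWithin_mono (0:ℝ) (show Set.Ioi (0:ℝ) ⊆ {0}ᶜ from fun t ht => ne_of_gt ht))
  have h3 : Filter.Tendsto (fun t : ℝ => f (euclidPair x z) - f (euclidPair x y)
      + (1 - t) * (τ / 2 * ‖y - z‖ ^ 2)) (nhdsWithin 0 (Set.Ioi 0))
      (nhds (f (euclidPair x z) - f (euclidPair x y) + τ / 2 * ‖y - z‖ ^ 2)) := by
    have : Continuous (fun t : ℝ => f (euclidPair x z) - f (euclidPair x y)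
      + (1 - t) * (τ / 2 * ‖y - z‖ ^ 2)) := by fun_prop
    have h := this.tendsto 0
    simp only [sub_zero, one_mul] at h
    exact h.mono_left nhdsWithin_le_nhds
  refine le_of_tendsto_of_tendsto h3 h2 ?_
  have hmem : Set.Ioo (0:ℝ) 1 ∈ nhdsWithin (0:ℝ) (Set.Ioi 0) := Ioo_mem_nhdsGT one_pos
  filter_upwards [hmem] with t ht
  have h := hconc.2 (Set.mem_univ y) (Set.mem_univ z) (sub_nonneg.2 ht.2.le) ht.1.le
    (by ring : (1 - t) + t = 1)
  have e : (1 - t) • y + t • z = y + t • (z - y) := by module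
  rw [e] at h
  simp only [smul_eq_mul] at h
  rw [slope_def_field, sub_zero, le_div_iff₀ ht.1]
  simp only [zero_smul, add_zero]
  nlinarith

/-- Let `f : ℝ^D × ℝ^{d'} → ℝ` be `ℓ`-Lipschitz smooth, with `y ↦ f (x, y)`
`τ`-strongly concave with unique maximizer `y*(x)` for a fixed `x`.  Let `G` be a random
vector with `E[G] = ∇_y f (x, y)` and `E[‖G − ∇_y f (x, y)‖²] ≤ σ²/B`.  Then the stochastic
gradient ascent step `y⁺ = y + (1/(2ℓ)) • G` satisfies
`E[‖y⁺ − y*(x)‖²] ≤ (1 − τ/(4ℓ))·‖y − y*(x)‖² + σ²/(4ℓ²B)`. -/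
theorem stmt4 (D d' : ℕ) (ℓ τ σ B : ℝ) (hℓ : 0 < ℓ) (hτ : 0 < τ) (hσ : 0 < σ) (hB : 1 ≤ B)
    (f : EuclideanProd D d' → ℝ) (hdiff : Differentiable ℝ f)
    (hlip : ∀ z₁ z₂, ‖gradient f z₁ - gradient f z₂‖ ≤ ℓ * ‖z₁ - z₂‖)
    (x : EuclideanSpace ℝ (Fin D)) (ystar : EuclideanSpace ℝ (Fin d'))
    (hconc : StrongConcaveOn Set.univ τ (fun y => f (euclidPair x y)))
    (hmax : ∀ y, f (euclidPair x y) ≤ f (euclidPair x ystar))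
    (huniq : ∀ y', (∀ y, f (euclidPair x y) ≤ f (euclidPair x y')) → y' = ystar)
    (Ω : Type*) [MeasurableSpace Ω] (μ : Measure Ω) [IsProbabilityMeasure μ]
    (G : Ω → EuclideanSpace ℝ (Fin d'))
    (y : EuclideanSpace ℝ (Fin d'))
    (hGint : Integrable G μ)
    (hGmean : (∫ ω, G ω ∂μ) = gradient (fun y' => f (euclidPair x y')) y)
    (hGvarint : Integrable
      (fun ω => ‖G ω - gradient (fun y' => f (euclidPair x y')) y‖ ^ 2) μ)
    (hGvar : (∫ ω, ‖G ω - gradient (fun y' => f (euclidPair x y')) y‖ ^ 2 ∂μ) ≤ σ ^ 2 / B) :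
    (∫ ω, ‖(y + (1 / (2 * ℓ)) • G ω) - ystar‖ ^ 2 ∂μ)
      ≤ (1 - τ / (4 * ℓ)) * ‖y - ystar‖ ^ 2 + σ ^ 2 / (4 * ℓ ^ 2 * B) := by
  have hvar := hGvar
  generalize hv : gradient (fun y' => f (euclidPair x y')) y = v at *
  have h1 := aux_descent ℓ hℓ f hdiff hlip x y v hv
  have h1' := h1.trans (hmax _)
  have h2 := aux_strong τ f hdiff x y ystar hconc
  rw [hv] at h2
  set η : ℝ := 1 / (2 * ℓ) with hη
  set w := y - ystar + η • v with hw
  have hsub : Integrable (fun ω => G ω - v) μ := hGint.sub (integrable_const v)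
  have hin : Integrable (fun ω => inner ℝ w (G ω - v)) μ := hsub.const_inner w
  have hexp : ∀ ω, ‖(y + η • G ω) - ystar‖ ^ 2
      = ‖w‖ ^ 2 + 2 * η * inner ℝ w (G ω - v) + η ^ 2 * ‖G ω - v‖ ^ 2 := by
    intro ω
    have : (y + η • G ω) - ystar = w + η • (G ω - v) := by rw [hw]; module
    rw [this, norm_add_sq_real, inner_smul_right, norm_smul, mul_pow, Real.norm_eq_abs, sq_abs]
    ring
  have hz : ∫ ω, inner ℝ w (G ω - v) ∂μ = 0 := by
    rw [integral_inner hsub, integral_sub hGint (integrable_const v), hGmean]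
    simp
  have hE : ∫ ω, ‖(y + η • G ω) - ystar‖ ^ 2 ∂μ
      = ‖w‖ ^ 2 + η ^ 2 * ∫ ω, ‖G ω - v‖ ^ 2 ∂μ := by
    simp_rw [hexp]
    have hA : Integrable (fun ω => ‖w‖ ^ 2 + 2 * η * inner ℝ w (G ω - v)) μ :=
      (integrable_const _).add (hin.const_mul _)
    rw [integral_add hA (hGvarint.const_mul _),
      integral_add (integrable_const _) (hin.const_mul _), integral_const_mul,
      integral_const_mul, hz]
    simp
  rw [hE]
  have hwn : ‖w‖ ^ 2 = ‖y - ystar‖ ^ 2 - 2 * η * inner ℝ v (ystar - y) + η ^ 2 * ‖v‖ ^ 2 := by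
    rw [hw, norm_add_sq_real, inner_smul_right, norm_smul, mul_pow, Real.norm_eq_abs, sq_abs,
      real_inner_comm, show ystar - y = -(y - ystar) by abel, inner_neg_right]
    ring
  have hηp : 0 < η := by positivity
  have e1 : σ ^ 2 / (4 * ℓ ^ 2 * B) = η ^ 2 * (σ ^ 2 / B) := by
    have : B ≠ 0 := by positivity
    rw [hη]; field_simp; try norm_num
  have e2 : τ / (4 * ℓ) = τ * η / 2 := by rw [hη]; field_simp; try norm_num
  have e3 : ‖v‖ ^ 2 / (2 * ℓ) = η * ‖v‖ ^ 2 := by rw [hη]; field_simp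
  rw [e3] at h1'
  rw [e1, e2, hwn]
  have a1 := mul_le_mul_of_nonneg_left hGvar (sq_nonneg η)
  have a2 := mul_le_mul_of_nonneg_left h2 hηp.le
  have a3 := mul_le_mul_of_nonneg_left h1' hηp.le
  have a4 : 0 ≤ η * τ * ‖y - ystar‖ ^ 2 := by positivity
  have a5 := mul_le_mul_of_nonneg_left (hmax y) hηp.le
  nlinarith
end
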